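/- Let γ > 1, R > 0, T∞ > 0, m > 0 and u∞ < 0 with m u∞² > γRT∞. Then there exists a constant c > 0 such that for all real a, b, d: (RT∞|u∞|/2)a² − RT∞ ab + (m|u∞|/2)b² − R b d + (R|u∞|/(2(γ−1)T∞))d² ≥ c(a² + b² + d²). -/

import Mathlib

/-!
The form is an arrowhead form: `b` is coupled to both `a` and `d`, which are not coupled to each
other. Young's inequality shows that such a form is nonnegative once its Schur complement
`C - ∑ i, B i ^ 2 / A i` is. Coercivity with constant `c` is nonnegativity of the form with all
diagonal coefficients lowered by `c`, and a strictly positive Schur complement stays positive for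
small `c`. For the flux form the Schur complement is `(m u∞² - γRT∞) / (2|u∞|)`.
-/

section Arrowhead

open Filter Topology

variable {ι 𝕜 : Type*} [Fintype ι] [Field 𝕜] [LinearOrder 𝕜] [IsStrictOrderedRing 𝕜]
  {A B : ι → 𝕜} {C : 𝕜}

theorem arrowhead_form_nonneg (hA : ∀ i, 0 < A i) (hC : ∑ i, B i ^ 2 / A i ≤ C)
    (x : ι → 𝕜) (y : 𝕜) :
    0 ≤ ∑ i, A i * x i ^ 2 - 2 * (∑ i, B i * x i) * y + C * y ^ 2 := by
  have young (i : ι) : 2 * x i * (B i * y) ≤ A i * x i ^ 2 + (A i)⁻¹ * (B i * y) ^ 2 :=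
    two_mul_le_add_mul_sq (hA i)
  have cross_le : 2 * (∑ i, B i * x i) * y ≤ ∑ i, A i * x i ^ 2 + C * y ^ 2 :=
    calc 2 * (∑ i, B i * x i) * y
      _ = ∑ i, 2 * x i * (B i * y) := by
        rw [Finset.mul_sum, Finset.sum_mul]
        exact Finset.sum_congr rfl fun i _ ↦ by ring
      _ ≤ ∑ i, (A i * x i ^ 2 + (A i)⁻¹ * (B i * y) ^ 2) := Finset.sum_le_sum fun i _ ↦ young i
      _ = ∑ i, A i * x i ^ 2 + (∑ i, B i ^ 2 / A i) * y ^ 2 := by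
        rw [Finset.sum_add_distrib, Finset.sum_mul]
        exact congrArg _ (Finset.sum_congr rfl fun i _ ↦ by ring)
      _ ≤ ∑ i, A i * x i ^ 2 + C * y ^ 2 := by gcongr
  linarith

theorem exists_pos_sum_sq_div_sub_lt_sub (hA : ∀ i, 0 < A i) (hC : ∑ i, B i ^ 2 / A i < C) :
    ∃ c > 0, (∀ i, c < A i) ∧ ∑ i, B i ^ 2 / (A i - c) < C - c := by
  let _ : TopologicalSpace 𝕜 := Preorder.topology 𝕜
  have _ : OrderTopology 𝕜 := ⟨rfl⟩
  have sum_continuousAt : ContinuousAt (fun c ↦ ∑ i, B i ^ 2 / (A i - c)) 0 :=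
    tendsto_finsetSum _ fun i _ ↦ continuousAt_const.div
      (continuousAt_const.sub continuousAt_id) (by simpa only [id, sub_zero] using (hA i).ne')
  have bound_continuousAt : ContinuousAt (fun c ↦ C - c) 0 := by fun_prop
  have small : ∀ᶠ c in 𝓝 (0 : 𝕜), (∀ i, c < A i) ∧ ∑ i, B i ^ 2 / (A i - c) < C - c :=
    (eventually_all.2 fun i ↦ eventually_lt_nhds (hA i)).and <|
      sum_continuousAt.eventually_lt bound_continuousAt (by simpa only [sub_zero] using hC)
  obtain ⟨c, hc, hc_pos⟩ :=
    ((small.filter_mono nhdsWithin_le_nhds).and (self_mem_nhdsWithin (s := Set.Ioi 0))).exists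
  exact ⟨c, hc_pos, hc⟩

theorem arrowhead_form_coercive (hA : ∀ i, 0 < A i) (hC : ∑ i, B i ^ 2 / A i < C) :
    ∃ c > 0, ∀ (x : ι → 𝕜) (y : 𝕜),
      c * (∑ i, x i ^ 2 + y ^ 2) ≤
        ∑ i, A i * x i ^ 2 - 2 * (∑ i, B i * x i) * y + C * y ^ 2 := by
  obtain ⟨c, hc, hcA, hcC⟩ := exists_pos_sum_sq_div_sub_lt_sub hA hC
  refine ⟨c, hc, fun x y ↦ ?_⟩
  have shifted_nonneg := arrowhead_form_nonneg (fun i ↦ sub_pos.2 (hcA i)) hcC.le x y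
  simp only [sub_mul, Finset.sum_sub_distrib, ← Finset.mul_sum] at shifted_nonneg
  linarith

end Arrowhead

theorem flux_sum_sq_div_eq {𝕜 : Type*} [Field 𝕜] (γ R T u : 𝕜) :
    (R * T / 2) ^ 2 / (R * T * u / 2) + (R / 2) ^ 2 / (R * u / (2 * (γ - 1) * T)) =
      γ * R * T / (2 * u) := by
  field_simp
  ring

/-- Under `m u∞² > γRT∞` (with `|u∞| = −u∞`), the leading quadratic form of the flux
term `(−H̃₁)₁/ñ` is positive definite: there is `c > 0` with
`(RT∞|u∞|/2)a² − RT∞ab + (m|u∞|/2)b² − Rbd + (R|u∞|/(2(γ−1)T∞))d² ≥ c(a²+b²+d²)`. -/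
theorem flux_quadratic_positive
    (γ R Tinf m uinf : ℝ) (hγ : 1 < γ) (hR : 0 < R) (hT : 0 < Tinf) (hm : 0 < m)
    (hu : uinf < 0) (hsup : γ * R * Tinf < m * uinf ^ 2) :
    ∃ c > 0, ∀ a b d : ℝ,
      c * (a ^ 2 + b ^ 2 + d ^ 2) ≤
        (R * Tinf * (-uinf) / 2) * a ^ 2 - R * Tinf * a * b
          + (m * (-uinf) / 2) * b ^ 2 - R * b * d
          + (R * (-uinf) / (2 * (γ - 1) * Tinf)) * d ^ 2 := by
  have hv : 0 < -uinf := neg_pos.2 hu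
  have hγ' : 0 < γ - 1 := sub_pos.2 hγ
  let A : Fin 2 → ℝ := ![R * Tinf * (-uinf) / 2, R * (-uinf) / (2 * (γ - 1) * Tinf)]
  let B : Fin 2 → ℝ := ![R * Tinf / 2, R / 2]
  have hA : ∀ i, 0 < A i := Fin.forall_fin_two.2
    ⟨show 0 < R * Tinf * (-uinf) / 2 by positivity,
      show 0 < R * (-uinf) / (2 * (γ - 1) * Tinf) by positivity⟩
  have hC : ∑ i, B i ^ 2 / A i < m * (-uinf) / 2 :=
    calc ∑ i, B i ^ 2 / A i
      _ = γ * R * Tinf / (2 * (-uinf)) :=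
        (Fin.sum_univ_two _).trans (flux_sum_sq_div_eq γ R Tinf (-uinf))
      _ < m * uinf ^ 2 / (2 * (-uinf)) := by gcongr
      _ = m * (-uinf) / 2 := by field_simp
  obtain ⟨c, hc, coercive⟩ := arrowhead_form_coercive hA hC
  refine ⟨c, hc, fun a b d ↦ ?_⟩
  have bound := coercive ![a, d] b
  simp only [A, B, Fin.sum_univ_two, Matrix.cons_val_zero, Matrix.cons_val_one] at bound
  linarith
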